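/- arXiv:1803.02682 — 2 statements merged into one kernel-verified Lean document; each statement's English description precedes it below -/
import Mathlib

section
/- Let A ∈ ℝ^{n×n}, B ∈ ℝ^{n×m}, let Q ∈ ℝ^{n×n} be symmetric positive semi-definite and R ∈ ℝ^{m×m} symmetric positive definite. If P is a symmetric positive semi-definite matrix satisfying the strict Riccati inequality Aᵀ P + P A − P B R⁻¹ Bᵀ P + Q ≺ 0, then the matrix A − B R⁻¹ Bᵀ P is Hurwitz. -/
open MeasureTheory Matrix Filter

/-- A real square matrix is Hurwitz if all of its (complex) eigenvalues have
negative real part. -/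
def IsHurwitz {k : ℕ} (M : Matrix (Fin k) (Fin k) ℝ) : Prop :=
  ∀ μ ∈ spectrum ℂ (M.map (algebraMap ℝ ℂ)), μ.re < 0

/-!
For an eigenpair `M v = μ v`, the form `Mᴴ P + P M` takes the value `2 Re(μ) v* P v` at `v`. If it
is negative definite and `P ⪰ 0`, then `v* P v ≥ 0` forces `Re μ < 0`. With `S = B R⁻¹ Bᴴ` and
`M = A - S P`, the form `Mᴴ P + P M` is the Riccati expression minus the semidefinite terms `P S P`
and `Q`, hence negative definite.
-/

section Eigenvectors

variable {ι : Type*} [Fintype ι]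

lemma exists_mulVec_eq_smul_of_mem_spectrum {K : Type*} [DecidableEq ι] [Field K]
    {M : Matrix ι ι K} {μ : K} (hμ : μ ∈ spectrum K M) : ∃ v ≠ 0, M *ᵥ v = μ • v := by
  rw [← spectrum_toLin', ← Module.End.hasEigenvalue_iff_mem_spectrum] at hμ
  obtain ⟨v, hv⟩ := hμ.exists_hasEigenvector
  exact ⟨v, hv.2, hv.apply_eq_smul⟩

lemma star_dotProduct_lyapunov_mulVec_of_mulVec_eq_smul {α : Type*} [CommRing α] [StarRing α]
    {M : Matrix ι ι α} (P : Matrix ι ι α) {v : ι → α} {μ : α} (hv : M *ᵥ v = μ • v) :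
    star v ⬝ᵥ (Mᴴ * P + P * M) *ᵥ v = (star μ + μ) * (star v ⬝ᵥ P *ᵥ v) := by
  have hv_star : star v ᵥ* Mᴴ = star μ • star v := by rw [← star_mulVec, hv, star_smul]
  calc star v ⬝ᵥ (Mᴴ * P + P * M) *ᵥ v
      = (star v ᵥ* Mᴴ) ⬝ᵥ P *ᵥ v + star v ⬝ᵥ P *ᵥ (M *ᵥ v) := by
        rw [add_mulVec, dotProduct_add, ← mulVec_mulVec, ← mulVec_mulVec, dotProduct_mulVec]
    _ = (star μ + μ) * (star v ⬝ᵥ P *ᵥ v) := by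
        rw [hv_star, hv, mulVec_smul, smul_dotProduct, dotProduct_smul, smul_eq_mul, smul_eq_mul,
          add_mul]

end Eigenvectors

section Riccati

lemma lyapunov_sub_mul_eq {α : Type*} [NonUnitalRing α] [StarRing α] (a : α) {p s : α}
    (hp : IsSelfAdjoint p) (hs : IsSelfAdjoint s) :
    star (a - s * p) * p + p * (a - s * p) = star a * p + p * a - p * s * p - p * s * p := by
  simp only [star_sub, star_mul, hp.star_eq, hs.star_eq, sub_mul, mul_sub, mul_assoc]
  abel

lemma posDef_neg_lyapunov_of_posDef_neg_riccati {ι α : Type*} [Fintype ι] [Ring α]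
    [PartialOrder α] [StarRing α] [AddLeftMono α] {A P S Q : Matrix ι ι α}
    (hP : P.IsHermitian) (hS : S.PosSemidef) (hQ : Q.PosSemidef)
    (hric : (-(Aᴴ * P + P * A - P * S * P + Q)).PosDef) :
    (-((A - S * P)ᴴ * P + P * (A - S * P))).PosDef := by
  have hPSP : (P * S * P).PosSemidef := by
    simpa only [hP.eq] using hS.mul_mul_conjTranspose_same P
  have h_split : -((A - S * P)ᴴ * P + P * (A - S * P)) =
      -(Aᴴ * P + P * A - P * S * P + Q) + P * S * P + Q := by
    rw [← star_eq_conjTranspose, ← star_eq_conjTranspose, lyapunov_sub_mul_eq A hP hS.isHermitian]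
    abel
  rw [h_split]
  exact (hric.add_posSemidef hPSP).add_posSemidef hQ

end Riccati

section ScalarExtension

open scoped ComplexOrder

variable {ι 𝕜 𝕂 : Type*} [Finite ι] [RCLike 𝕜] [RCLike 𝕂] [Algebra 𝕜 𝕂] [StarModule 𝕜 𝕂]

open scoped MatrixOrder in
lemma posSemidef_map_algebraMap {M : Matrix ι ι 𝕜} (hM : M.PosSemidef) :
    (M.map (algebraMap 𝕜 𝕂)).PosSemidef := by
  classical
  cases nonempty_fintype ι
  obtain ⟨N, rfl⟩ := CStarAlgebra.nonneg_iff_eq_star_mul_self.mp hM.nonneg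
  rw [Matrix.map_mul, star_eq_conjTranspose, conjTranspose_map _ algebraMap_star_comm]
  exact posSemidef_conjTranspose_mul_self _

lemma posDef_map_algebraMap {M : Matrix ι ι 𝕜} (hM : M.PosDef) :
    (M.map (algebraMap 𝕜 𝕂)).PosDef := by
  classical
  cases nonempty_fintype ι
  exact (posSemidef_map_algebraMap hM.posSemidef).posDef_iff_isUnit.mpr
    (hM.isUnit.map (algebraMap 𝕜 𝕂).mapMatrix)

end ScalarExtension

section Spectrum

open scoped ComplexOrder

variable {ι 𝕜 𝕂 : Type*} [Fintype ι] [DecidableEq ι] [RCLike 𝕜] [RCLike 𝕂]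

lemma re_lt_zero_of_mem_spectrum_of_posDef_neg_lyapunov {M P : Matrix ι ι 𝕜} (hP : P.PosSemidef)
    (hM : (-(Mᴴ * P + P * M)).PosDef) {μ : 𝕜} (hμ : μ ∈ spectrum 𝕜 M) : RCLike.re μ < 0 := by
  obtain ⟨v, hv_ne, hv⟩ := exists_mulVec_eq_smul_of_mem_spectrum hμ
  have hP_nonneg : 0 ≤ RCLike.re (star v ⬝ᵥ P *ᵥ v) := hP.re_dotProduct_nonneg v
  have hM_pos : 0 < RCLike.re (star v ⬝ᵥ (-(Mᴴ * P + P * M)) *ᵥ v) := hM.re_dotProduct_pos hv_ne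
  have h_two_re : star μ + μ = ((2 * RCLike.re μ : ℝ) : 𝕜) := by
    rw [add_comm, RCLike.star_def, RCLike.add_conj, RCLike.ofReal_mul, RCLike.ofReal_ofNat]
  rw [neg_mulVec, dotProduct_neg, star_dotProduct_lyapunov_mulVec_of_mulVec_eq_smul P hv,
    h_two_re, map_neg, RCLike.re_ofReal_mul] at hM_pos
  by_contra! h_re
  linarith [mul_nonneg h_re hP_nonneg]

lemma re_lt_zero_of_mem_spectrum_map_of_posDef_neg_lyapunov [Algebra 𝕜 𝕂] [StarModule 𝕜 𝕂]
    {M P : Matrix ι ι 𝕜} (hP : P.PosSemidef) (hM : (-(Mᴴ * P + P * M)).PosDef) {μ : 𝕂}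
    (hμ : μ ∈ spectrum 𝕂 (M.map (algebraMap 𝕜 𝕂))) : RCLike.re μ < 0 := by
  have h_map : (-(Mᴴ * P + P * M)).map (algebraMap 𝕜 𝕂) =
      -((M.map (algebraMap 𝕜 𝕂))ᴴ * P.map (algebraMap 𝕜 𝕂) +
        P.map (algebraMap 𝕜 𝕂) * M.map (algebraMap 𝕜 𝕂)) := by
    rw [← conjTranspose_map _ algebraMap_star_comm]
    simp only [← RingHom.mapMatrix_apply, map_neg, map_add, map_mul]
  exact re_lt_zero_of_mem_spectrum_of_posDef_neg_lyapunov (posSemidef_map_algebraMap hP)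
    (h_map ▸ posDef_map_algebraMap hM) hμ

-- The scalar extension `𝕂` covers complex eigenvalues of real matrices (`𝕜 = ℝ`, `𝕂 = ℂ`) together
-- with complex matrices (`𝕜 = 𝕂 = ℂ`).
theorem stmt5_general {κ : Type*} [Fintype κ] [DecidableEq κ] [Algebra 𝕜 𝕂] [StarModule 𝕜 𝕂]
    {A P Q : Matrix ι ι 𝕜} {B : Matrix ι κ 𝕜} {R : Matrix κ κ 𝕜} (hQ : Q.PosSemidef) (hR : R.PosDef)
    (hP : P.PosSemidef)
    (hric : (-(Aᴴ * P + P * A - P * B * R⁻¹ * Bᴴ * P + Q)).PosDef) {μ : 𝕂}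
    (hμ : μ ∈ spectrum 𝕂 ((A - B * R⁻¹ * Bᴴ * P).map (algebraMap 𝕜 𝕂))) : RCLike.re μ < 0 := by
  have hS : (B * R⁻¹ * Bᴴ).PosSemidef := hR.inv.posSemidef.mul_mul_conjTranspose_same B
  have hric' : (-(Aᴴ * P + P * A - P * (B * R⁻¹ * Bᴴ) * P + Q)).PosDef := by
    simpa only [Matrix.mul_assoc] using hric
  exact re_lt_zero_of_mem_spectrum_map_of_posDef_neg_lyapunov hP
    (posDef_neg_lyapunov_of_posDef_neg_riccati hP.isHermitian hS hQ hric') hμ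

end Spectrum

/-- if `P ⪰ 0` satisfies the strict Riccati inequality
`Aᵀ P + P A − P B R⁻¹ Bᵀ P + Q ≺ 0` (with `Q ⪰ 0`, `R ≻ 0`), then
`A − B R⁻¹ Bᵀ P` is Hurwitz. -/
theorem stmt5 {n m : ℕ} (A : Matrix (Fin n) (Fin n) ℝ) (B : Matrix (Fin n) (Fin m) ℝ)
    (Q : Matrix (Fin n) (Fin n) ℝ) (R : Matrix (Fin m) (Fin m) ℝ)
    (hQ : Q.PosSemidef) (hR : R.PosDef)
    (P : Matrix (Fin n) (Fin n) ℝ) (hP : P.PosSemidef)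
    (hric : (-(Aᵀ * P + P * A - P * B * R⁻¹ * Bᵀ * P + Q)).PosDef) :
    IsHurwitz (A - B * R⁻¹ * Bᵀ * P) := by
  simp only [← conjTranspose_eq_transpose_of_trivial] at hric ⊢
  exact fun _ ↦ stmt5_general hQ hR hP hric
end

section
/- Let A ∈ ℝ^{n×n}, B ∈ ℝ^{n×m} with (A, B) stabilizable, let Q ⪰ 0 and R ≻ 0 be symmetric, and let λ_N > 0 and c ∈ ℝ satisfy 0 < c < 2/λ_N. Then there exists a symmetric positive semi-definite matrix P satisfying the strict Riccati inequality Aᵀ P + P A + (c² λ_N² − 2c λ_N) P B R⁻¹ Bᵀ P + λ_N Q ≺ 0. -/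
open MeasureTheory Matrix Filter

/-!
Write `M = A + B F` with `F` stabilizing. Completing the square gives, for symmetric `P`,
`Aᵀ P + P A - P B R⁻¹ Bᵀ P + Q = Mᵀ P + P M + (Fᵀ R F + Q) - (R F + Bᵀ P)ᵀ R⁻¹ (R F + Bᵀ P)`,
so it suffices to solve the Lyapunov inequality `Mᵀ P + P M + W ≺ 0` with `W = Fᵀ R F + Q`, which
does not involve `P`. The scalar in front of the quadratic term is negative and is absorbed by `R`.

The Lyapunov inequality is solved in an arbitrary C⋆-algebra by one explicit Euler step. If the
spectrum of `a` lies in the open left half plane, then `c = 1 + h a` has spectral radius less than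
one for some `h > 0`, so `x = ∑ (c⋆)ⁱ (h v) cⁱ` converges and satisfies `x = c⋆ x c + h v`;
expanding `c` yields `a⋆ x + x a = -v - h a⋆ x a ≤ -v`. Real matrices follow by taking entrywise
real parts of a complex solution.
-/

open scoped NNReal ENNReal Pointwise ComplexOrder MatrixOrder Matrix.Norms.L2Operator

theorem exists_pos_forall_norm_one_add_mul_lt_one {K : Set ℂ} (hK : IsCompact K)
    (hre : ∀ μ ∈ K, μ.re < 0) : ∃ h : ℝ, 0 < h ∧ ∀ μ ∈ K, ‖1 + h * μ‖ < 1 := by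
  have hsq : ∀ μ ∈ K, 0 < Complex.normSq μ := fun μ hμ =>
    Complex.normSq_pos.mpr fun h0 => by simpa [h0] using hre μ hμ
  obtain ⟨h, hpos, hle⟩ := hK.exists_forall_le' (f := fun μ => -μ.re / Complex.normSq μ)
    (Complex.continuous_re.continuousOn.neg.div Complex.continuous_normSq.continuousOn
      fun μ hμ => (hsq μ hμ).ne')
    fun μ hμ => div_pos (neg_pos.mpr (hre μ hμ)) (hsq μ hμ)
  refine ⟨h, hpos, fun μ hμ => (sq_lt_one_iff₀ (norm_nonneg _)).mp ?_⟩
  calc ‖1 + h * μ‖ ^ 2 = 1 + h * (2 * μ.re + h * Complex.normSq μ) := by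
        rw [← Complex.normSq_eq_norm_sq, Complex.normSq_apply, Complex.normSq_apply]
        simp only [Complex.add_re, Complex.add_im, Complex.one_re, Complex.one_im,
          Complex.re_ofReal_mul, Complex.im_ofReal_mul]
        ring
    _ ≤ 1 + h * (2 * μ.re + -μ.re) := by
        gcongr
        exact (le_div_iff₀ (hsq μ hμ)).mp (hle μ hμ)
    _ < 1 := by nlinarith [hre μ hμ]

section BanachAlgebra

variable {𝔸 : Type*} [NormedRing 𝔸] [NormedAlgebra ℂ 𝔸] [CompleteSpace 𝔸]

theorem eventually_nnnorm_pow_lt_pow_of_spectralRadius_lt {a : 𝔸} {r : ℝ≥0}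
    (h : spectralRadius ℂ a < r) : ∀ᶠ n : ℕ in atTop, ‖a ^ n‖₊ < r ^ n := by
  have hgelfand := spectrum.pow_nnnorm_pow_one_div_tendsto_nhds_spectralRadius a
  filter_upwards [hgelfand.eventually_lt_const h, eventually_gt_atTop 0] with n hn hn0
  have hn_pos : (0 : ℝ) < n := Nat.cast_pos.mpr hn0
  rw [one_div, ENNReal.rpow_inv_lt_iff hn_pos, ENNReal.rpow_natCast] at hn
  exact_mod_cast hn

theorem exists_spectralRadius_one_add_smul_lt_one {a : 𝔸}
    (ha : ∀ μ ∈ spectrum ℂ a, μ.re < 0) :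
    ∃ h : ℝ, 0 < h ∧ spectralRadius ℂ (1 + h • a) < 1 := by
  obtain ⟨h, hpos, hlt⟩ :=
    exists_pos_forall_norm_one_add_mul_lt_one (spectrum.isCompact a) ha
  refine ⟨h, hpos, ?_⟩
  cases subsingleton_or_nontrivial 𝔸
  · simp
  refine spectrum.spectralRadius_lt_of_forall_lt (r := 1) _ fun z hz => ?_
  have hspec : spectrum ℂ (1 + h • a) = {1} + (h : ℂ) • spectrum ℂ a := by
    rw [← spectrum.smul_eq_smul _ _ (spectrum.nonempty a), spectrum.singleton_add_eq, map_one,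
      Complex.coe_smul]
  rw [hspec] at hz
  obtain ⟨_, rfl, _, ⟨μ, hμ, rfl⟩, rfl⟩ := hz
  exact hlt μ hμ

end BanachAlgebra

section CStarAlgebra

variable {A : Type*} [CStarAlgebra A] [PartialOrder A] [StarOrderedRing A]

theorem exists_nonneg_eq_star_mul_mul_add {c w : A} (hc : spectralRadius ℂ c < 1) (hw : 0 ≤ w) :
    ∃ x : A, 0 ≤ x ∧ x = star c * x * c + w := by
  obtain ⟨r, hcr, hr⟩ := ENNReal.lt_iff_exists_nnreal_btwn.mp hc
  have hr1 : r ^ 2 < 1 := pow_lt_one' (mod_cast hr) two_ne_zero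
  set f : ℕ → A := fun i => star (c ^ i) * w * c ^ i with hf
  have hfs : Summable f := by
    refine .of_norm_bounded_eventually_nat (g := fun i => ‖w‖ * ((r ^ 2 : ℝ≥0) : ℝ) ^ i)
      ((NNReal.summable_coe.mpr (NNReal.summable_geometric hr1)).mul_left _) ?_
    filter_upwards [eventually_nnnorm_pow_lt_pow_of_spectralRadius_lt hcr] with i hi
    calc ‖f i‖ ≤ ‖star (c ^ i)‖ * ‖w‖ * ‖c ^ i‖ := norm_mul₃_le ..
      _ = ‖w‖ * ‖c ^ i‖ ^ 2 := by rw [norm_star]; ring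
      _ ≤ ‖w‖ * (r ^ i) ^ 2 := by gcongr; exact_mod_cast hi.le
      _ = ‖w‖ * ((r ^ 2 : ℝ≥0) : ℝ) ^ i := by push_cast; ring
  refine ⟨∑' i, f i, tsum_nonneg fun i => star_left_conjugate_nonneg hw _, ?_⟩
  have hsucc : ∀ i, f (i + 1) = star c * f i * c := fun i => by
    simp only [hf, pow_succ, star_mul, mul_assoc]
  have hzero : f 0 = w := by simp only [hf, pow_zero, star_one, one_mul, mul_one]
  calc ∑' i, f i = f 0 + ∑' i, f (i + 1) := hfs.tsum_eq_zero_add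
    _ = w + star c * (∑' i, f i) * c := by
      rw [hzero, tsum_congr hsucc, (hfs.mul_left _).tsum_mul_right, hfs.tsum_mul_left]
    _ = star c * (∑' i, f i) * c + w := add_comm _ _

theorem exists_isStrictlyPositive_lyapunov {a w : A} (ha : ∀ μ ∈ spectrum ℂ a, μ.re < 0)
    (hw : IsSelfAdjoint w) :
    ∃ x : A, IsStrictlyPositive x ∧ IsStrictlyPositive (-(star a * x + x * a + w)) := by
  obtain ⟨h, hpos, hrad⟩ := exists_spectralRadius_one_add_smul_lt_one ha
  set v : A := 1 + algebraMap ℝ A ‖w‖ with hv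
  have hv_pos : IsStrictlyPositive v :=
    isStrictlyPositive_one.add_nonneg (algebraMap_nonneg A (norm_nonneg w))
  have hvw : IsStrictlyPositive (v - w) := by
    rw [hv, add_sub_assoc]
    exact isStrictlyPositive_one.add_nonneg (sub_nonneg.mpr hw.le_algebraMap_norm_self)
  have hhv_pos : IsStrictlyPositive (h • v) := hv_pos.smul hpos
  obtain ⟨x, hx0, hx⟩ := exists_nonneg_eq_star_mul_mul_add hrad hhv_pos.nonneg
  refine ⟨x, hx ▸ .nonneg_add (star_left_conjugate_nonneg hx0 _) hhv_pos, ?_⟩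
  have hlyap : h • -(star a * x + x * a) = h • (v + h • (star a * x * a)) := by
    have hexp : star (1 + h • a) * x * (1 + h • a) =
        x + h • (star a * x + x * a) + h • h • (star a * x * a) := by
      simp only [star_add, star_one, star_smul, star_trivial, add_mul, mul_add, one_mul, mul_one,
        smul_mul_assoc, mul_smul_comm, smul_add]
      abel
    rw [hexp] at hx
    linear_combination (norm := module) hx
  have hdecomp : -(star a * x + x * a + w) = (v - w) + h • (star a * x * a) := by
    rw [neg_add, smul_right_injective A hpos.ne' hlyap]
    abel
  rw [hdecomp]
  exact hvw.add_nonneg (smul_nonneg hpos.le (star_left_conjugate_nonneg hx0 a))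

end CStarAlgebra

theorem posDef_map_re {ι 𝕜 : Type*} [Finite ι] [RCLike 𝕜] {S : Matrix ι ι 𝕜} (hS : S.PosDef) :
    (S.map RCLike.re).PosDef := by
  have := Fintype.ofFinite ι
  refine .of_dotProduct_mulVec_pos ?_ fun x hx => ?_
  · ext i j
    simpa using congrArg RCLike.re (hS.isHermitian.apply i j)
  · have hx' : (fun i => (x i : 𝕜)) ≠ 0 := fun h0 => hx <| by
      ext i
      simpa using congrFun h0 i
    have hquad : star x ⬝ᵥ (S.map RCLike.re *ᵥ x) =
        RCLike.re (star (fun i => (x i : 𝕜)) ⬝ᵥ (S *ᵥ fun i => (x i : 𝕜))) := by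
      simp [dotProduct, mulVec]
    rw [hquad]
    exact hS.re_dotProduct_pos hx'

theorem exists_posDef_lyapunov {ι : Type*} [Fintype ι] [DecidableEq ι] {M W : Matrix ι ι ℝ}
    (hM : ∀ μ ∈ spectrum ℂ (M.map (algebraMap ℝ ℂ)), μ.re < 0) (hW : W.IsHermitian) :
    ∃ P : Matrix ι ι ℝ, P.PosDef ∧ (-(Mᵀ * P + P * M + W)).PosDef := by
  obtain ⟨Z, hZ, hneg⟩ := exists_isStrictlyPositive_lyapunov hM
    (hW.map (algebraMap ℝ ℂ) fun _ => by simp).isSelfAdjoint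
  refine ⟨Z.map RCLike.re, posDef_map_re hZ.posDef, ?_⟩
  convert! posDef_map_re hneg.posDef using 1
  ext i j
  simp [Matrix.mul_apply, star_eq_conjTranspose]

section Riccati

variable {ι κ : Type*} [Fintype ι] [Fintype κ] [DecidableEq κ]

theorem riccati_add_completed_square {α : Type*} [CommRing α] [StarRing α] {A P Q : Matrix ι ι α}
    {B : Matrix ι κ α} {R : Matrix κ κ α} {F : Matrix κ ι α} (hP : P.IsHermitian)
    (hR : R.IsHermitian) (hRu : IsUnit R) :
    Aᴴ * P + P * A - P * B * R⁻¹ * Bᴴ * P + Q + (R * F + Bᴴ * P)ᴴ * R⁻¹ * (R * F + Bᴴ * P) =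
      (A + B * F)ᴴ * P + P * (A + B * F) + (Fᴴ * R * F + Q) := by
  have hRd := (isUnit_iff_isUnit_det _).mp hRu
  have hmul_inv (Y : Matrix κ ι α) : R * (R⁻¹ * Y) = Y := mul_nonsing_inv_cancel_left _ _ hRd
  have hinv_mul (Y : Matrix κ ι α) : R⁻¹ * (R * Y) = Y := nonsing_inv_mul_cancel_left _ _ hRd
  simp only [conjTranspose_add, conjTranspose_mul, conjTranspose_conjTranspose, hP.eq, hR.eq,
    Matrix.add_mul, Matrix.mul_add, Matrix.mul_assoc, hmul_inv, hinv_mul]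
  abel

theorem posDef_neg_riccati_of_posDef_neg_lyapunov {K : Type*} [Field K] [PartialOrder K]
    [StarRing K] [AddLeftMono K] {A P Q : Matrix ι ι K} {B : Matrix ι κ K} {R : Matrix κ κ K}
    {F : Matrix κ ι K} (hP : P.IsHermitian) (hR : R.PosDef)
    (h : (-((A + B * F)ᴴ * P + P * (A + B * F) + (Fᴴ * R * F + Q))).PosDef) :
    (-(Aᴴ * P + P * A - P * B * R⁻¹ * Bᴴ * P + Q)).PosDef := by
  have hsq : ((R * F + Bᴴ * P)ᴴ * R⁻¹ * (R * F + Bᴴ * P)).PosSemidef :=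
    hR.inv.posSemidef.conjTranspose_mul_mul_same _
  rw [← riccati_add_completed_square hP hR.isHermitian hR.isUnit] at h
  simpa only [neg_add_rev, neg_add_cancel_comm] using h.add_posSemidef hsq

end Riccati

theorem stmt10_general {ι κ : Type*} [Fintype ι] [DecidableEq ι] [Fintype κ] [DecidableEq κ]
    {A : Matrix ι ι ℝ} {B : Matrix ι κ ℝ}
    (hstab : ∃ F : Matrix κ ι ℝ,
      ∀ μ ∈ spectrum ℂ ((A + B * F).map (algebraMap ℝ ℂ)), μ.re < 0)
    {Q : Matrix ι ι ℝ} {R : Matrix κ κ ℝ} (hQ : Q.IsHermitian) (hR : R.PosDef)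
    {γ : ℝ} (hγ : γ < 0) :
    ∃ P : Matrix ι ι ℝ, P.PosDef ∧
      (-(Aᵀ * P + P * A + γ • (P * B * R⁻¹ * Bᵀ * P) + Q)).PosDef := by
  obtain ⟨F, hF⟩ := hstab
  set S : Matrix κ κ ℝ := (-γ)⁻¹ • R
  have hS : S.PosDef := hR.smul (inv_pos.mpr (neg_pos.mpr hγ))
  have hSinv : S⁻¹ = -γ • R⁻¹ := inv_eq_right_inv <| by
    rw [smul_mul_smul_comm, inv_mul_cancel₀ (neg_ne_zero.mpr hγ.ne), one_smul,
      mul_nonsing_inv _ ((isUnit_iff_isUnit_det _).mp hR.isUnit)]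
  obtain ⟨P, hP, hlyap⟩ := exists_posDef_lyapunov hF
    ((isHermitian_conjTranspose_mul_mul F hS.isHermitian).add hQ)
  refine ⟨P, hP, ?_⟩
  have hric := posDef_neg_riccati_of_posDef_neg_lyapunov hP.isHermitian hS hlyap
  simpa only [hSinv, conjTranspose_eq_transpose_of_trivial, Matrix.mul_smul, Matrix.smul_mul,
    Matrix.mul_neg, Matrix.neg_mul, neg_smul, sub_neg_eq_add] using hric

/-- if `(A,B)` is stabilizable, `Q ⪰ 0`, `R ≻ 0`, `λ_N > 0` and
`0 < c < 2/λ_N`, then there exists a symmetric psd `P` with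
`Aᵀ P + P A + (c²λ_N² − 2cλ_N) P B R⁻¹ Bᵀ P + λ_N Q ≺ 0`. -/
theorem stmt10 {n m : ℕ}
    (A : Matrix (Fin n) (Fin n) ℝ) (B : Matrix (Fin n) (Fin m) ℝ)
    (hstab : ∃ F : Matrix (Fin m) (Fin n) ℝ, IsHurwitz (A + B * F))
    (Q : Matrix (Fin n) (Fin n) ℝ) (R : Matrix (Fin m) (Fin m) ℝ)
    (hQ : Q.PosSemidef) (hR : R.PosDef)
    (lamN c : ℝ) (hlamN : 0 < lamN) (hc0 : 0 < c) (hc : c < 2 / lamN) :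
    ∃ P : Matrix (Fin n) (Fin n) ℝ, P.PosSemidef ∧
      (-(Aᵀ * P + P * A +
          (c ^ 2 * lamN ^ 2 - 2 * c * lamN) • (P * B * R⁻¹ * Bᵀ * P) +
          lamN • Q)).PosDef := by
  have hγ : c ^ 2 * lamN ^ 2 - 2 * c * lamN < 0 := by
    nlinarith [mul_pos hc0 hlamN, (lt_div_iff₀ hlamN).mp hc]
  exact (stmt10_general hstab (hQ.smul hlamN.le).isHermitian hR hγ).imp
    fun _ => And.imp_left PosDef.posSemidef
end
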